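/- Let L be a real symmetric positive definite d×d matrix, define f(w) = ½⟨L w, w⟩, let B be a real symmetric d×d matrix, and set A := ½(L B + B L). Suppose there exists ξ > 0 with B L B ⪯ ξ·A, and let 0 < η ≤ 1/ξ. Then for every w ∈ ℝ^d: f(w − η·B w) ≤ f(w) − η·(1 − ηξ/2)·⟨A w, w⟩ ≤ f(w) − (η/2)·⟨A w, w⟩. -/

import Mathlib

open Matrix

/-- per-round descent estimate. For `f(w) = ½⟨Lw,w⟩` with
`L ≻ 0`, `B` symmetric, `A = ½(LB + BL)`, `B L B ⪯ ξ A` with `ξ > 0`, and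
`0 < η ≤ 1/ξ`, the sketched update `w ↦ w − η B w` satisfies
`f(w − ηBw) ≤ f(w) − η(1 − ηξ/2)⟨Aw,w⟩ ≤ f(w) − (η/2)⟨Aw,w⟩`. -/
theorem stmt_14 (d : ℕ) (L : Matrix (Fin d) (Fin d) ℝ) (hL : L.PosDef)
    (B : Matrix (Fin d) (Fin d) ℝ) (hB : B.IsSymm)
    (A : Matrix (Fin d) (Fin d) ℝ) (hA : A = (1/2 : ℝ) • (L * B + B * L))
    (ξ : ℝ) (hξ : 0 < ξ) (hBLB : (ξ • A - B * L * B).PosSemidef)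
    (η : ℝ) (hη0 : 0 < η) (hη : η ≤ 1 / ξ) :
    ∀ w : Fin d → ℝ,
      (1/2) * (L.mulVec (w - η • B.mulVec w) ⬝ᵥ (w - η • B.mulVec w))
          ≤ (1/2) * (L.mulVec w ⬝ᵥ w) - η * (1 - η * ξ / 2) * (A.mulVec w ⬝ᵥ w)
      ∧ (1/2) * (L.mulVec w ⬝ᵥ w) - η * (1 - η * ξ / 2) * (A.mulVec w ⬝ᵥ w)
          ≤ (1/2) * (L.mulVec w ⬝ᵥ w) - (η / 2) * (A.mulVec w ⬝ᵥ w) := by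
  intro w
  have sB : ∀ x y : Fin d → ℝ, B.mulVec x ⬝ᵥ y = x ⬝ᵥ B.mulVec y := by
    intro x y
    rw [Matrix.dotProduct_mulVec, ← Matrix.mulVec_transpose, hB.eq]
  have ha : A.mulVec w ⬝ᵥ w
      = (1/2) * (L.mulVec (B.mulVec w) ⬝ᵥ w + L.mulVec w ⬝ᵥ B.mulVec w) := by
    rw [hA, Matrix.smul_mulVec, Matrix.add_mulVec, smul_dotProduct, add_dotProduct,
      ← Matrix.mulVec_mulVec, ← Matrix.mulVec_mulVec, sB, smul_eq_mul]
  have h1 : L.mulVec (B.mulVec w) ⬝ᵥ B.mulVec w ≤ ξ * (A.mulVec w ⬝ᵥ w) := by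
    have h := hBLB.dotProduct_mulVec_nonneg w
    rw [star_trivial, dotProduct_comm, Matrix.sub_mulVec, sub_dotProduct, Matrix.smul_mulVec,
      smul_dotProduct, ← Matrix.mulVec_mulVec, ← Matrix.mulVec_mulVec, sB, smul_eq_mul] at h
    linarith
  have h0 : 0 ≤ L.mulVec (B.mulVec w) ⬝ᵥ B.mulVec w := by
    have h := hL.posSemidef.dotProduct_mulVec_nonneg (B.mulVec w)
    rwa [star_trivial, dotProduct_comm] at h
  have hA0 : 0 ≤ A.mulVec w ⬝ᵥ w := nonneg_of_mul_nonneg_right (h0.trans h1) hξ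
  have hηξ : η * ξ ≤ 1 := (le_div_iff₀ hξ).mp hη
  have hexp : L.mulVec (w - η • B.mulVec w) ⬝ᵥ (w - η • B.mulVec w)
      = L.mulVec w ⬝ᵥ w - 2 * η * (A.mulVec w ⬝ᵥ w)
        + η ^ 2 * (L.mulVec (B.mulVec w) ⬝ᵥ B.mulVec w) := by
    rw [ha]
    simp only [Matrix.mulVec_sub, Matrix.mulVec_smul, sub_dotProduct, dotProduct_sub,
      smul_dotProduct, dotProduct_smul, smul_eq_mul]
    ring
  constructor
  · rw [hexp]
    have := mul_le_mul_of_nonneg_left h1 (sq_nonneg η)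
    nlinarith
  · have := mul_nonneg (mul_nonneg hη0.le hA0) (sub_nonneg.mpr hηξ)
    nlinarith
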